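/- For sufficiently large ρ the following holds: if V is a lattice r-subspace, ξ ∈ Ξ(V), ν ∈ V^⊥, and ξ + ν ∈ Ξ(V), then N(ξ) = N(ξ + ν). Consequently, for ξ ∈ Ξ(V) the set N(ξ) depends only on the projection ξ_V. -/

import Mathlib

noncomputable section

open Set Submodule Module MeasureTheory Relation
open scoped RealInnerProductSpace

variable {d : ℕ}

/-- The lattice Γ generated over ℤ by the basis `B` of ℝ^d. -/
def latticeOf (B : Basis (Fin d) ℝ (EuclideanSpace ℝ (Fin d))) :
    Submodule ℤ (EuclideanSpace ℝ (Fin d)) :=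
  Submodule.span ℤ (Set.range B)

/-- The determinant d(Γ) of the lattice generated by `B`. -/
def latDet (B : Basis (Fin d) ℝ (EuclideanSpace ℝ (Fin d))) : ℝ :=
  |(EuclideanSpace.basisFun (Fin d) ℝ).toBasis.det (fun i => B i)|

/-- The dual lattice Γ† = {θ : θ·g ∈ 2πℤ for all g ∈ Γ}. -/
def dualLattice (B : Basis (Fin d) ℝ (EuclideanSpace ℝ (Fin d))) :
    Set (EuclideanSpace ℝ (Fin d)) :=
  {θ | ∀ g ∈ latticeOf B, ∃ k : ℤ, ⟪θ, g⟫ = 2 * Real.pi * k}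

/-- Θ_r : nonzero dual lattice vectors of norm at most r. -/
def Theta (B : Basis (Fin d) ℝ (EuclideanSpace ℝ (Fin d))) (r : ℝ) :
    Set (EuclideanSpace ℝ (Fin d)) :=
  {θ | θ ∈ dualLattice B ∧ θ ≠ 0 ∧ ‖θ‖ ≤ r}

/-- Θ_r⁰ : dual lattice vectors of norm at most r (including 0). -/
def Theta0 (B : Basis (Fin d) ℝ (EuclideanSpace ℝ (Fin d))) (r : ℝ) :
    Set (EuclideanSpace ℝ (Fin d)) :=
  {θ | θ ∈ dualLattice B ∧ ‖θ‖ ≤ r}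

/-- A lattice r-subspace: a subspace spanned by dual lattice vectors from Θ_r⁰. -/
def IsLatticeSubspace (B : Basis (Fin d) ℝ (EuclideanSpace ℝ (Fin d))) (r : ℝ)
    (V : Submodule ℝ (EuclideanSpace ℝ (Fin d))) : Prop :=
  ∃ S : Set (EuclideanSpace ℝ (Fin d)), S ⊆ Theta0 B r ∧ V = Submodule.span ℝ S

/-- Orthogonal projection ξ_V onto a subspace, viewed in the ambient space. -/
def projV (V : Submodule ℝ (EuclideanSpace ℝ (Fin d))) (ξ : EuclideanSpace ℝ (Fin d)) :
    EuclideanSpace ℝ (Fin d) :=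
  (orthogonalProjection V ξ : EuclideanSpace ℝ (Fin d))

/-- ω_n: the volume of the unit ball in ℝ^n. -/
def unitBallVol (n : ℕ) : ℝ :=
  (MeasureTheory.volume (Metric.ball (0 : EuclideanSpace ℝ (Fin n)) 1)).toReal

/-- The resonant layer Λ(θ) (= ℝ^d when θ = 0). -/
def layer (ρ a : ℝ) (θ : EuclideanSpace ℝ (Fin d)) : Set (EuclideanSpace ℝ (Fin d)) :=
  {ξ | θ = 0 ∨ |⟪ξ, θ⟫| < ρ ^ a * ‖θ‖}

/-- Υ_θ(ξ): the points θ-resonant congruent to ξ. -/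
def upsTheta (ρ a : ℝ) (θ ξ : EuclideanSpace ℝ (Fin d)) : Set (EuclideanSpace ℝ (Fin d)) :=
  {η | ξ ∈ layer ρ a θ ∧ η ∈ layer ρ a θ ∧ ∃ l : ℤ, ξ - η = (l : ℝ) • θ}

/-- One step of resonant congruence (with some θ ∈ Θ_r⁰). -/
def resStep (B : Basis (Fin d) ℝ (EuclideanSpace ℝ (Fin d))) (ρ a r : ℝ)
    (ξ η : EuclideanSpace ℝ (Fin d)) : Prop :=
  ∃ θ ∈ Theta0 B r, η ∈ upsTheta ρ a θ ξ

/-- Υ(ξ): all points resonant congruent to ξ. -/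
def Ups (B : Basis (Fin d) ℝ (EuclideanSpace ℝ (Fin d))) (ρ a r : ℝ)
    (ξ : EuclideanSpace ℝ (Fin d)) : Set (EuclideanSpace ℝ (Fin d)) :=
  {η | Relation.ReflTransGen (resStep B ρ a r) ξ η}

/-- N(ξ) = Υ(ξ) − ξ. -/
def resN (B : Basis (Fin d) ℝ (EuclideanSpace ℝ (Fin d))) (ρ a r : ℝ)
    (ξ : EuclideanSpace ℝ (Fin d)) : Set (EuclideanSpace ℝ (Fin d)) :=
  {m | ξ + m ∈ Ups B ρ a r ξ}

/-- Ξ₁(V) = {ξ : |ξ_V| < ρ^{α_n}}, n = dim V. -/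
def Xi1 (ρ : ℝ) (α : ℕ → ℝ) (V : Submodule ℝ (EuclideanSpace ℝ (Fin d))) :
    Set (EuclideanSpace ℝ (Fin d)) :=
  {ξ | ‖projV V ξ‖ < ρ ^ α (Module.finrank ℝ V)}

/-- Ξ₂(V) = ∪_{ξ ∈ Ξ₁(V)} Υ(ξ). -/
def Xi2 (B : Basis (Fin d) ℝ (EuclideanSpace ℝ (Fin d))) (ρ r : ℝ) (α : ℕ → ℝ)
    (V : Submodule ℝ (EuclideanSpace ℝ (Fin d))) : Set (EuclideanSpace ℝ (Fin d)) :=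
  {η | ∃ ξ ∈ Xi1 ρ α V, η ∈ Ups B ρ (α 1) r ξ}

/-- Ξ(V): Ξ₂(V) minus the Ξ₂(W) for all lattice r-subspaces W of larger dimension. -/
def Xi (B : Basis (Fin d) ℝ (EuclideanSpace ℝ (Fin d))) (ρ r : ℝ) (α : ℕ → ℝ)
    (V : Submodule ℝ (EuclideanSpace ℝ (Fin d))) : Set (EuclideanSpace ℝ (Fin d)) :=
  Xi2 B ρ r α V \
    ⋃ W ∈ {W : Submodule ℝ (EuclideanSpace ℝ (Fin d)) |
        IsLatticeSubspace B r W ∧ Module.finrank ℝ V < Module.finrank ℝ W},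
      Xi2 B ρ r α W

/-- The standing conditions on the parameters ρ ≥ 1, r, κ > 0 and the exponents α_j:
0 = α₀, α_{n+1} > α_n + 2κd², α_d < 1, r ≤ ρ^κ, and r ≥ r₀ (i.e. Θ_r⁰ spans ℝ^d). -/
def GoodParams (B : Basis (Fin d) ℝ (EuclideanSpace ℝ (Fin d))) (ρ r κ : ℝ)
    (α : ℕ → ℝ) : Prop :=
  1 ≤ ρ ∧ 0 < κ ∧ α 0 = 0 ∧ (∀ n < d, α n + 2 * κ * (d : ℝ) ^ 2 < α (n + 1)) ∧
    α d < 1 ∧ r ≤ ρ ^ κ ∧ Submodule.span ℝ (Theta0 B r) = ⊤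

/-- The determinant of `v`, in the coordinates `⟪·, B j⟫ / 2π` in which the dual lattice is `ℤ^d`. -/
def dualDet (B : Basis (Fin d) ℝ (EuclideanSpace ℝ (Fin d))) :
    EuclideanSpace ℝ (Fin d) [⋀^Fin d]→ₗ[ℝ] ℝ :=
  Matrix.detRowAlternating.compLinearMap
    (LinearMap.pi fun j => (2 * Real.pi)⁻¹ • (innerₗ (EuclideanSpace ℝ (Fin d)) (B j)))

theorem dualDet_apply (B : Basis (Fin d) ℝ (EuclideanSpace ℝ (Fin d)))
    (v : Fin d → EuclideanSpace ℝ (Fin d)) :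
    dualDet B v = Matrix.det (Matrix.of fun i j => (2 * Real.pi)⁻¹ * ⟪B j, v i⟫) := by
  rfl

theorem exists_dualDet_bound (B : Basis (Fin d) ℝ (EuclideanSpace ℝ (Fin d))) :
    ∃ C : ℝ, 0 ≤ C ∧ ∀ v, |dualDet B v| ≤ C * ∏ i, ‖v i‖ := by
  have hc : Continuous (fun v => dualDet B v) := by
    simp only [dualDet_apply]
    apply Continuous.matrix_det
    refine continuous_matrix fun i j => ?_
    simp only [Matrix.of_apply]
    fun_prop
  let F : ContinuousMultilinearMap ℝ (fun _ : Fin d => EuclideanSpace ℝ (Fin d)) ℝ :=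
    { (dualDet B).toMultilinearMap with cont := hc }
  exact ⟨‖F‖, norm_nonneg _, fun v => F.le_opNorm v⟩

theorem one_le_abs_dualDet (B : Basis (Fin d) ℝ (EuclideanSpace ℝ (Fin d)))
    (v : Fin d → EuclideanSpace ℝ (Fin d)) (hv : ∀ i, v i ∈ dualLattice B)
    (hli : LinearIndependent ℝ v) : 1 ≤ |dualDet B v| := by
  have hint : ∀ i j, ∃ k : ℤ, (2 * Real.pi)⁻¹ * ⟪B j, v i⟫ = k := by
    intro i j
    obtain ⟨k, hk⟩ := hv i (B j) (Submodule.subset_span ⟨j, rfl⟩)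
    refine ⟨k, ?_⟩
    rw [real_inner_comm, hk]
    field_simp
  choose k hk using hint
  have hdet : dualDet B v = ((Matrix.of k).det : ℤ) := by
    rw [dualDet_apply, Int.cast_det]
    congr 1
    ext i j
    exact hk i j
  have hne : dualDet B v ≠ 0 := by
    rw [dualDet_apply, ← isUnit_iff_ne_zero, ← Matrix.isUnit_iff_isUnit_det,
      ← Matrix.linearIndependent_rows_iff_isUnit]
    let T : EuclideanSpace ℝ (Fin d) →ₗ[ℝ] (Fin d → ℝ) :=
      LinearMap.pi fun j => (2 * Real.pi)⁻¹ • (innerₗ (EuclideanSpace ℝ (Fin d)) (B j))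
    refine hli.map' T ?_
    rw [LinearMap.ker_eq_bot']
    intro x hx
    refine InnerProductSpace.ext_inner_left_basis B fun j => ?_
    have := congrFun hx j
    simpa [T, Real.pi_ne_zero] using this
  rw [hdet] at hne ⊢
  exact_mod_cast Int.one_le_abs (by exact_mod_cast hne)

/-- A dual lattice vector of norm at most `r` outside a lattice `r`-subspace `U` stays away
from `U`. -/
theorem exists_norm_le_mul_norm_sub (hd : 1 ≤ d)
    (B : Basis (Fin d) ℝ (EuclideanSpace ℝ (Fin d))) :
    ∃ C : ℝ, 0 ≤ C ∧ ∀ r R : ℝ, r ≤ R → Submodule.span ℝ (Theta0 B r) = ⊤ →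
      ∀ U, IsLatticeSubspace B r U → ∀ θ ∈ Theta0 B r, θ ∉ U → ∀ p ∈ U,
        ‖θ‖ ≤ C * R ^ d * ‖θ - p‖ := by
  obtain ⟨C, hC, hbound⟩ := exists_dualDet_bound B
  refine ⟨C, hC, ?_⟩
  rintro r R hrR htop U ⟨S, hS, rfl⟩ θ hθ hθU p hp
  obtain ⟨b, hbS, hbspan, hbli⟩ := exists_linearIndependent ℝ S
  have hb : LinearIndepOn ℝ id b := hbli
  have hb' : LinearIndepOn ℝ id (insert θ b) := hb.id_insert (by rwa [hbspan])
  have hsub : insert θ b ⊆ Theta0 B r :=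
    Set.insert_subset hθ (hbS.trans hS)
  set t := hb'.extend hsub
  have htli : LinearIndependent ℝ ((↑) : t → EuclideanSpace ℝ (Fin d)) :=
    hb'.linearIndepOn_extend hsub
  have htspan : ⊤ ≤ Submodule.span ℝ (Set.range ((↑) : t → EuclideanSpace ℝ (Fin d))) := by
    rw [Subtype.range_coe, ← htop]
    exact Submodule.span_le.2 (hb'.subset_span_extend hsub)
  let bt : Basis t ℝ (EuclideanSpace ℝ (Fin d)) := Basis.mk htli htspan
  let e : Fin d ≃ t := B.indexEquiv bt
  let v : Fin d → EuclideanSpace ℝ (Fin d) := fun i => (e i : EuclideanSpace ℝ (Fin d))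
  have hvmem : ∀ i, v i ∈ Theta0 B r := fun i => hb'.extend_subset hsub (e i).2
  have hvli : LinearIndependent ℝ v := htli.comp e e.injective
  obtain ⟨i, hi⟩ : ∃ i, v i = θ :=
    ⟨e.symm ⟨θ, hb'.subset_extend hsub (Set.mem_insert _ _)⟩, by simp [v]⟩
  have hpzero : dualDet B (Function.update v i p) = 0 := by
    have hle : Submodule.span ℝ S ≤
        LinearMap.ker ((dualDet B).toMultilinearMap.toLinearMap v i) := by
      rw [← hbspan, Submodule.span_le]
      intro x hx
      obtain ⟨j, hj⟩ : ∃ j, v j = x :=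
        ⟨e.symm ⟨x, hb'.subset_extend hsub (Set.mem_insert_of_mem _ hx)⟩, by simp [v]⟩
      have hij : i ≠ j := by
        rintro rfl
        exact hθU (hbspan ▸ Submodule.subset_span (by rwa [← hi, hj]))
      simpa [← hj] using (dualDet B).map_update_self v hij
    simpa using hle hp
  have heq : dualDet B v = dualDet B (Function.update v i (θ - p)) := by
    rw [AlternatingMap.map_update_sub, hpzero, sub_zero, ← hi, Function.update_eq_self]
  have hprod : ∏ j, ‖Function.update v i (θ - p) j‖ ≤ ‖θ - p‖ * R ^ (d - 1) := by
    have h1 : (fun j => ‖Function.update v i (θ - p) j‖) =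
        Function.update (fun j => ‖v j‖) i ‖θ - p‖ := by
      ext j
      by_cases h : j = i
      · subst h; simp
      · simp [h]
    rw [h1, Finset.prod_update_of_mem (Finset.mem_univ i)]
    gcongr
    calc ∏ j ∈ Finset.univ \ {i}, ‖v j‖ ≤ ∏ j ∈ Finset.univ \ {i}, R :=
          Finset.prod_le_prod (fun _ _ => norm_nonneg _) fun j _ => (hvmem j).2.trans hrR
      _ = R ^ (d - 1) := by
          rw [Finset.prod_const, Finset.card_sdiff_of_subset (Finset.subset_univ _)]
          simp
  have hR : 0 ≤ R := (norm_nonneg _).trans (hθ.2.trans hrR)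
  have hone : 1 ≤ C * (‖θ - p‖ * R ^ (d - 1)) :=
    calc 1 ≤ |dualDet B v| := one_le_abs_dualDet B v (fun j => (hvmem j).1) hvli
      _ ≤ C * ∏ j, ‖Function.update v i (θ - p) j‖ := heq ▸ hbound _
      _ ≤ _ := by gcongr
  calc ‖θ‖ ≤ R := hθ.2.trans hrR
    _ ≤ R * (C * (‖θ - p‖ * R ^ (d - 1))) := le_mul_of_one_le_right hR hone
    _ = C * R ^ d * ‖θ - p‖ := by
      obtain ⟨n, rfl⟩ : ∃ n, d = n + 1 := ⟨d - 1, by omega⟩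
      simp only [Nat.add_sub_cancel, pow_succ]
      ring

/-- The projection of `y` onto `U` has norm at most `M`. -/
def ProjBound (y : EuclideanSpace ℝ (Fin d)) (U : Submodule ℝ (EuclideanSpace ℝ (Fin d)))
    (M : ℝ) : Prop :=
  ∀ u ∈ U, |⟪y, u⟫| ≤ M * ‖u‖

theorem projV_mem (V : Submodule ℝ (EuclideanSpace ℝ (Fin d)))
    (y : EuclideanSpace ℝ (Fin d)) : projV V y ∈ V :=
  Subtype.property _

theorem sub_projV_mem_orthogonal (V : Submodule ℝ (EuclideanSpace ℝ (Fin d)))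
    (y : EuclideanSpace ℝ (Fin d)) : y - projV V y ∈ Vᗮ :=
  Submodule.sub_starProjection_mem_orthogonal (K := V) y

theorem inner_projV_left {V : Submodule ℝ (EuclideanSpace ℝ (Fin d))}
    (y : EuclideanSpace ℝ (Fin d)) {u : EuclideanSpace ℝ (Fin d)} (hu : u ∈ V) :
    ⟪projV V y, u⟫ = ⟪y, u⟫ := by
  have := Submodule.inner_left_of_mem_orthogonal hu (sub_projV_mem_orthogonal V y)
  rw [inner_sub_left] at this
  linarith

theorem projBound_norm_projV (V : Submodule ℝ (EuclideanSpace ℝ (Fin d)))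
    (y : EuclideanSpace ℝ (Fin d)) : ProjBound y V ‖projV V y‖ := fun u hu => by
  rw [← inner_projV_left y hu]
  exact abs_real_inner_le_norm _ _

theorem norm_le_of_sq_le {x : EuclideanSpace ℝ (Fin d)} {M : ℝ} (hM : 0 ≤ M)
    (h : ⟪x, x⟫ ≤ M * ‖x‖) : ‖x‖ ≤ M := by
  rw [real_inner_self_eq_norm_mul_norm] at h
  by_contra! hlt
  have : 0 < ‖x‖ := hM.trans_lt hlt
  nlinarith

theorem ProjBound.norm_projV_le {V : Submodule ℝ (EuclideanSpace ℝ (Fin d))}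
    {y : EuclideanSpace ℝ (Fin d)} {M : ℝ} (hM : 0 ≤ M) (h : ProjBound y V M) :
    ‖projV V y‖ ≤ M := by
  refine norm_le_of_sq_le hM ?_
  rw [inner_projV_left y (projV_mem V y)]
  exact (le_abs_self _).trans (h _ (projV_mem V y))

theorem ProjBound.of_norm_sub_le {U : Submodule ℝ (EuclideanSpace ℝ (Fin d))}
    {x y : EuclideanSpace ℝ (Fin d)} {M E : ℝ} (h : ProjBound y U M) (hxy : ‖x - y‖ ≤ E) :
    ProjBound x U (M + E) := by
  intro u hu
  have h1 : ⟪x, u⟫ = ⟪y, u⟫ + ⟪x - y, u⟫ := by rw [inner_sub_left]; ring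
  calc |⟪x, u⟫| ≤ |⟪y, u⟫| + |⟪x - y, u⟫| := h1 ▸ abs_add_le _ _
    _ ≤ M * ‖u‖ + E * ‖u‖ := by
      gcongr
      · exact h u hu
      · exact (abs_real_inner_le_norm _ _).trans (by gcongr)
    _ = (M + E) * ‖u‖ := by ring

theorem ProjBound.norm_sub_le {U : Submodule ℝ (EuclideanSpace ℝ (Fin d))}
    {x y : EuclideanSpace ℝ (Fin d)} {M : ℝ} (hM : 0 ≤ M) (hx : ProjBound x U M)
    (hy : ProjBound y U M) (hxy : x - y ∈ U) : ‖x - y‖ ≤ 2 * M := by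
  refine norm_le_of_sq_le (by positivity) ?_
  rw [inner_sub_left]
  have h1 := abs_le.1 (hx _ hxy)
  have h2 := abs_le.1 (hy _ hxy)
  linarith [h1.2, h2.1]

/-- Bounds on the projections of `y` onto `U` and onto the line through `θ` give a bound on
the projection onto their sum, at the cost of the reciprocal sine of the angle between them. -/
theorem ProjBound.sup_span_singleton {U : Submodule ℝ (EuclideanSpace ℝ (Fin d))}
    {y θ : EuclideanSpace ℝ (Fin d)} {M A L : ℝ} (hM : 0 ≤ M) (hA : 0 ≤ A)
    (hL0 : 0 ≤ L) (hU : ProjBound y U M) (hθ : |⟪y, θ⟫| ≤ A * ‖θ‖) (hL : ∀ p ∈ U, ‖θ‖ ≤ L * ‖θ - p‖) :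
    ProjBound y (U ⊔ Submodule.span ℝ {θ}) ((1 + L) * (M + A)) := by
  intro u hu
  obtain ⟨u', hu', s, hs, rfl⟩ := Submodule.mem_sup.1 hu
  obtain ⟨t, rfl⟩ := Submodule.mem_span_singleton.1 hs
  set p := projV U θ with hp
  have hpU : p ∈ U := projV_mem U θ
  have hw : θ - p ∈ Uᗮ := sub_projV_mem_orthogonal U θ
  have haU : u' + t • p ∈ U := U.add_mem hu' (U.smul_mem t hpU)
  have hdecomp : u' + t • θ = (u' + t • p) + t • (θ - p) := by module
  have horth : ⟪u' + t • p, t • (θ - p)⟫ = 0 :=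
    Submodule.inner_right_of_mem_orthogonal haU (Uᗮ.smul_mem t hw)
  have hpyth := norm_add_sq_eq_norm_sq_add_norm_sq_of_inner_eq_zero _ _ horth
  rw [hdecomp]
  set a := u' + t • p
  set w := t • (θ - p) with hwdef
  have ha : ‖a‖ ≤ ‖a + w‖ := by
    nlinarith [norm_nonneg a, norm_nonneg w, norm_nonneg (a + w)]
  have hwn : ‖w‖ ≤ ‖a + w‖ := by
    nlinarith [norm_nonneg a, norm_nonneg w, norm_nonneg (a + w)]
  have hpn : ‖p‖ ≤ ‖θ‖ := by
    refine norm_le_of_sq_le (norm_nonneg _) ?_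
    rw [hp, inner_projV_left θ (projV_mem U θ)]
    exact real_inner_le_norm _ _
  have hyw : |⟪y, w⟫| ≤ L * (M + A) * ‖w‖ := by
    have h1 : ⟪y, w⟫ = t * (⟪y, θ⟫ - ⟪y, p⟫) := by
      rw [hwdef, inner_smul_right, inner_sub_right]
    have h2 : |⟪y, θ⟫ - ⟪y, p⟫| ≤ A * ‖θ‖ + M * ‖θ‖ :=
      (abs_sub _ _).trans (add_le_add hθ ((hU p hpU).trans (by gcongr)))
    rw [h1, abs_mul, hwdef, norm_smul, Real.norm_eq_abs]
    calc |t| * |⟪y, θ⟫ - ⟪y, p⟫| ≤ |t| * ((M + A) * ‖θ‖) := by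
          gcongr; linarith
      _ ≤ |t| * ((M + A) * (L * ‖θ - p‖)) := by
          gcongr; exact hL p hpU
      _ = _ := by ring
  have hLw : L * (M + A) * ‖w‖ ≤ L * (M + A) * ‖a + w‖ := by gcongr
  rw [inner_add_right]
  calc |⟪y, a⟫ + ⟪y, w⟫| ≤ |⟪y, a⟫| + |⟪y, w⟫| := abs_add_le _ _
    _ ≤ M * ‖a + w‖ + L * (M + A) * ‖a + w‖ :=
      add_le_add ((hU a haU).trans (by gcongr)) (hyw.trans hLw)
    _ ≤ (1 + L) * (M + A) * ‖a + w‖ := by nlinarith [mul_nonneg hA (norm_nonneg (a + w))]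

/-- A step of resonant congruence along a direction in `U`. -/
def stepIn (B : Basis (Fin d) ℝ (EuclideanSpace ℝ (Fin d))) (ρ a r : ℝ)
    (U : Submodule ℝ (EuclideanSpace ℝ (Fin d))) (ξ η : EuclideanSpace ℝ (Fin d)) : Prop :=
  ∃ θ ∈ Theta0 B r, θ ∈ U ∧ η ∈ upsTheta ρ a θ ξ

section Steps

variable {B : Basis (Fin d) ℝ (EuclideanSpace ℝ (Fin d))} {ρ a r : ℝ}
  {U U' : Submodule ℝ (EuclideanSpace ℝ (Fin d))} {x y z : EuclideanSpace ℝ (Fin d)}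

theorem upsTheta_symm {θ : EuclideanSpace ℝ (Fin d)} (h : y ∈ upsTheta ρ a θ x) :
    x ∈ upsTheta ρ a θ y := by
  obtain ⟨hx, hy, l, hl⟩ := h
  refine ⟨hy, hx, -l, ?_⟩
  rw [← neg_sub x y, hl]
  push_cast
  module

theorem reflTransGen_stepIn_symm (h : ReflTransGen (stepIn B ρ a r U) x y) :
    ReflTransGen (stepIn B ρ a r U) y x :=
  have : Std.Symm (stepIn B ρ a r U) :=
    ⟨fun _ _ ⟨θ, hθ, hU, hs⟩ => ⟨θ, hθ, hU, upsTheta_symm hs⟩⟩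
  ReflTransGen.stdSymm.symm _ _ h

theorem stepIn_top : stepIn B ρ a r ⊤ = resStep B ρ a r := by
  ext x y
  simp [stepIn, resStep]

theorem mem_Ups_iff : y ∈ Ups B ρ a r x ↔ ReflTransGen (stepIn B ρ a r ⊤) x y := by
  rw [stepIn_top]
  rfl

theorem reflTransGen_stepIn_mono (hU : U ≤ U') (h : ReflTransGen (stepIn B ρ a r U) x y) :
    ReflTransGen (stepIn B ρ a r U') x y :=
  h.lift id fun _ _ ⟨θ, hθ, hm, hs⟩ => ⟨θ, hθ, hU hm, hs⟩

theorem sub_mem_of_reflTransGen_stepIn (h : ReflTransGen (stepIn B ρ a r U) x y) :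
    x - y ∈ U := by
  induction h with
  | refl => simp
  | tail _ hs ih =>
    obtain ⟨θ, _, hm, _, _, l, hl⟩ := hs
    rw [← sub_add_sub_cancel, hl]
    exact U.add_mem ih (U.smul_mem _ hm)

/-- A chain that cannot be realised with directions in `U'` reaches, along directions in `U'`,
a resonant layer of a direction outside `U'`. -/
theorem exists_exit (h : ReflTransGen (stepIn B ρ a r U) x z)
    (hn : ¬ ReflTransGen (stepIn B ρ a r U') x z) :
    ∃ y, ∃ θ ∈ Theta0 B r, ReflTransGen (stepIn B ρ a r U') x y ∧ y ∈ layer ρ a θ ∧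
      θ ∈ U ∧ θ ∉ U' := by
  induction h with
  | refl => exact absurd ReflTransGen.refl hn
  | @tail b c _ hs ih =>
    by_cases hb : ReflTransGen (stepIn B ρ a r U') x b
    · obtain ⟨θ, hθ, hm, hs⟩ := hs
      exact ⟨b, θ, hθ, hb, hs.1, hm, fun hm' => hn (hb.tail ⟨θ, hθ, hm', hs⟩)⟩
    · exact ih hb

theorem isLatticeSubspace_bot : IsLatticeSubspace B r ⊥ :=
  ⟨∅, Set.empty_subset _, Submodule.span_empty.symm⟩

theorem IsLatticeSubspace.sup_span_singleton {θ : EuclideanSpace ℝ (Fin d)}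
    (hU : IsLatticeSubspace B r U) (hθ : θ ∈ Theta0 B r) :
    IsLatticeSubspace B r (U ⊔ Submodule.span ℝ {θ}) := by
  obtain ⟨S, hS, rfl⟩ := hU
  exact ⟨S ∪ {θ}, Set.union_subset hS (by simpa using hθ), (Submodule.span_union _ _).symm⟩

theorem abs_inner_le_of_mem_layer {θ : EuclideanSpace ℝ (Fin d)} (h : y ∈ layer ρ a θ) :
    |⟪y, θ⟫| ≤ ρ ^ a * ‖θ‖ := by
  rcases h with rfl | h
  · simp
  · exact h.le

theorem finrank_sup_span_singleton_of_notMem {θ : EuclideanSpace ℝ (Fin d)} (hθ : θ ∉ U) :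
    Module.finrank ℝ (U ⊔ Submodule.span ℝ {θ} : Submodule ℝ (EuclideanSpace ℝ (Fin d))) =
      Module.finrank ℝ U + 1 := by
  have h0 : θ ≠ 0 := fun h => hθ (h ▸ U.zero_mem)
  have h := Submodule.finrank_sup_add_finrank_inf_eq U (Submodule.span ℝ {θ})
  rw [disjoint_iff.1 ((Submodule.disjoint_span_singleton' h0).2 hθ), finrank_bot,
    finrank_span_singleton h0] at h
  simpa using h

/-- A point from which chains in `U` leave every smaller lattice subspace has a controlled
projection onto lattice subspaces of `U` of each dimension. -/
theorem exists_projBound_of_exits {L : ℝ} (hρ : 0 ≤ ρ) (hL0 : 0 ≤ L)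
    (hL : ∀ U, IsLatticeSubspace B r U → ∀ θ ∈ Theta0 B r, θ ∉ U → ∀ p ∈ U,
      ‖θ‖ ≤ L * ‖θ - p‖)
    (hdiam : ∀ U', IsLatticeSubspace B r U' → Module.finrank ℝ U' < Module.finrank ℝ U →
      ∀ y, ReflTransGen (stepIn B ρ a r U') z y →
        ‖z - y‖ ≤ 2 * ((6 * (1 + L)) ^ Module.finrank ℝ U' * ρ ^ a))
    (hexit : ∀ U', IsLatticeSubspace B r U' → U' < U → ∃ w,
      ReflTransGen (stepIn B ρ a r U) z w ∧ ¬ ReflTransGen (stepIn B ρ a r U') z w)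
    (j : ℕ) (hj : j ≤ Module.finrank ℝ U) :
    ∃ U', IsLatticeSubspace B r U' ∧ U' ≤ U ∧ Module.finrank ℝ U' = j ∧
      ProjBound z U' ((6 * (1 + L)) ^ j * ρ ^ a) := by
  have hA : 0 ≤ ρ ^ a := Real.rpow_nonneg hρ a
  induction j with
  | zero =>
    refine ⟨⊥, isLatticeSubspace_bot, bot_le, finrank_bot _ _, fun u hu => ?_⟩
    simp [(Submodule.mem_bot ℝ).1 hu]
  | succ j ih =>
    obtain ⟨U', hlat, hle, hfin, hbd⟩ := ih (by omega)
    have hlt : U' < U := lt_of_le_of_ne hle (by rintro rfl; omega)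
    obtain ⟨w, hw, hnw⟩ := hexit U' hlat hlt
    obtain ⟨y, θ, hθ, hzy, hy, hθU, hθU'⟩ := exists_exit hw hnw
    have hE := hdiam U' hlat (by omega) y hzy
    rw [hfin] at hE
    set D := (6 * (1 + L)) ^ j * ρ ^ a with hD
    have hpow : 1 ≤ (6 * (1 + L)) ^ j := one_le_pow₀ (by linarith)
    have hAD : ρ ^ a ≤ D := le_mul_of_one_le_left hA hpow
    have hyU := hbd.of_norm_sub_le (norm_sub_rev z y ▸ hE)
    have hyU' := hyU.sup_span_singleton (by linarith) hA hL0 (abs_inner_le_of_mem_layer hy)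
      (hL U' hlat θ hθ hθU')
    refine ⟨_, hlat.sup_span_singleton hθ,
      sup_le hle ((Submodule.span_singleton_le_iff_mem _ _).2 hθU),
      by rw [finrank_sup_span_singleton_of_notMem hθU', hfin], fun u hu => ?_⟩
    refine (hyU'.of_norm_sub_le hE u hu).trans ?_
    gcongr
    rw [pow_succ', mul_assoc, ← hD]
    nlinarith [mul_le_mul_of_nonneg_left hAD hL0, mul_nonneg hL0 (hA.trans hAD)]

/-- The points joined by chains with directions in `U` are close to each other. -/
theorem norm_sub_le_of_reflTransGen_stepIn {L : ℝ} (hρ : 0 ≤ ρ) (hL0 : 0 ≤ L)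
    (hL : ∀ U, IsLatticeSubspace B r U → ∀ θ ∈ Theta0 B r, θ ∉ U → ∀ p ∈ U,
      ‖θ‖ ≤ L * ‖θ - p‖) (hU : IsLatticeSubspace B r U)
    (hxy : ReflTransGen (stepIn B ρ a r U) x y) :
    ‖x - y‖ ≤ 2 * ((6 * (1 + L)) ^ Module.finrank ℝ U * ρ ^ a) := by
  induction hk : Module.finrank ℝ U using Nat.strong_induction_on generalizing U x y with
  | _ k ih =>
  have hA : 0 ≤ ρ ^ a := Real.rpow_nonneg hρ a
  have hsmall_or : ∀ z w, ReflTransGen (stepIn B ρ a r U) z w →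
      ‖z - w‖ ≤ 2 * ((6 * (1 + L)) ^ k * ρ ^ a) ∨
        ProjBound z U ((6 * (1 + L)) ^ k * ρ ^ a) := by
    intro z w hzw
    by_cases h : ∃ U', IsLatticeSubspace B r U' ∧ U' < U ∧
        ∀ v, ReflTransGen (stepIn B ρ a r U) z v → ReflTransGen (stepIn B ρ a r U') z v
    · obtain ⟨U', hlat, hlt, hv⟩ := h
      have hfin : Module.finrank ℝ U' < k := hk ▸ Submodule.finrank_lt_finrank_of_lt hlt
      left
      refine (ih _ hfin hlat (hv w hzw) rfl).trans ?_
      gcongr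
      linarith
    · right
      push Not at h
      obtain ⟨U', -, hle, hfin, hbd⟩ := exists_projBound_of_exits (U := U) (z := z) hρ hL0 hL
        (fun U' hlat hlt v hv => ih _ (hk ▸ hlt) hlat hv rfl) h k hk.ge
      rwa [Submodule.eq_of_le_of_finrank_eq hle (hfin.trans hk.symm)] at hbd
  rcases hsmall_or x y hxy with h | hx
  · exact h
  rcases hsmall_or y x (reflTransGen_stepIn_symm hxy) with h | hy
  · rwa [norm_sub_rev]
  exact hx.norm_sub_le (by positivity) hy (sub_mem_of_reflTransGen_stepIn hxy)

theorem mem_Xi_of_mem_Ups {α : ℕ → ℝ} {V : Submodule ℝ (EuclideanSpace ℝ (Fin d))}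
    (hx : x ∈ Xi B ρ r α V) (hxy : y ∈ Ups B ρ (α 1) r x) : y ∈ Xi B ρ r α V := by
  rw [mem_Ups_iff] at hxy
  obtain ⟨⟨ζ, hζ, hζx⟩, hnot⟩ := hx
  rw [mem_Ups_iff] at hζx
  refine ⟨⟨ζ, hζ, mem_Ups_iff.2 (hζx.trans hxy)⟩, fun hy => hnot ?_⟩
  simp only [Set.mem_iUnion] at hy ⊢
  obtain ⟨W, hW, ω, hω, hωy⟩ := hy
  exact ⟨W, hW, ω, hω, mem_Ups_iff.2
    ((mem_Ups_iff.1 hωy).trans (reflTransGen_stepIn_symm hxy))⟩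

theorem notMem_Xi2_of_mem_Xi {α : ℕ → ℝ} {V W : Submodule ℝ (EuclideanSpace ℝ (Fin d))}
    (hx : x ∈ Xi B ρ r α V) (hW : IsLatticeSubspace B r W)
    (hVW : Module.finrank ℝ V < Module.finrank ℝ W) : x ∉ Xi2 B ρ r α W := fun h =>
  hx.2 (Set.mem_biUnion ⟨hW, hVW⟩ h)

theorem mem_Xi1_span_singleton {α : ℕ → ℝ} {θ : EuclideanSpace ℝ (Fin d)} (hρ : 0 < ρ)
    (hθ : θ ≠ 0) (hx : x ∈ layer ρ (α 1) θ) : x ∈ Xi1 ρ α (Submodule.span ℝ {θ}) := by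
  have hx' : |⟪x, θ⟫| < ρ ^ α 1 * ‖θ‖ := hx.resolve_left hθ
  show ‖projV _ x‖ < _
  rw [finrank_span_singleton hθ]
  obtain ⟨t, ht⟩ := Submodule.mem_span_singleton.1 (projV_mem (Submodule.span ℝ {θ}) x)
  have hpos : 0 < ρ ^ α 1 := Real.rpow_pos_of_pos hρ _
  have hθ' : 0 < ‖θ‖ := norm_pos_iff.2 hθ
  have hin := inner_projV_left x (Submodule.mem_span_singleton_self (R := ℝ) θ)
  rw [← ht, inner_smul_left, real_inner_self_eq_norm_mul_norm] at hin
  rw [← ht, norm_smul, Real.norm_eq_abs]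
  rw [← hin] at hx'
  simp only [conj_trivial, abs_mul, abs_norm] at hx'
  rw [← mul_assoc] at hx'
  exact lt_of_mul_lt_mul_right hx' hθ'.le

/-- The resonant directions at a point of `Ξ(V)` lie in `V`. -/
theorem mem_of_mem_layer_of_mem_Xi {α : ℕ → ℝ} {L : ℝ}
    {V : Submodule ℝ (EuclideanSpace ℝ (Fin d))} {θ : EuclideanSpace ℝ (Fin d)}
    (hρ : 0 < ρ) (hL0 : 0 ≤ L)
    (hL : ∀ U, IsLatticeSubspace B r U → ∀ θ ∈ Theta0 B r, θ ∉ U → ∀ p ∈ U,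
      ‖θ‖ ≤ L * ‖θ - p‖)
    (hgap : ∀ n, 1 ≤ n → n < d →
      (1 + L) * (ρ ^ α n + 2 * ((6 * (1 + L)) ^ n * ρ ^ α 1) + ρ ^ α 1) < ρ ^ α (n + 1))
    (hV : IsLatticeSubspace B r V) (hx : x ∈ Xi B ρ r α V) (hθ : θ ∈ Theta0 B r)
    (hxθ : x ∈ layer ρ (α 1) θ) : θ ∈ V := by
  by_contra hθV
  have hθ0 : θ ≠ 0 := fun h => hθV (h ▸ V.zero_mem)
  rcases Nat.eq_zero_or_pos (Module.finrank ℝ V) with h0 | h1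
  · have hlat : IsLatticeSubspace B r (Submodule.span ℝ {θ}) :=
      ⟨{θ}, by simpa using hθ, rfl⟩
    refine notMem_Xi2_of_mem_Xi hx hlat (by rw [h0, finrank_span_singleton hθ0]; norm_num) ?_
    exact ⟨x, mem_Xi1_span_singleton hρ hθ0 hxθ, mem_Ups_iff.2 ReflTransGen.refl⟩
  obtain ⟨ζ, hζ, hζx⟩ := hx.1
  rw [mem_Ups_iff] at hζx
  obtain ⟨y, φ, hφ, hζy, hyφ, hφV⟩ : ∃ y, ∃ φ ∈ Theta0 B r,
      ReflTransGen (stepIn B ρ (α 1) r V) ζ y ∧ y ∈ layer ρ (α 1) φ ∧ φ ∉ V := by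
    by_cases h : ReflTransGen (stepIn B ρ (α 1) r V) ζ x
    · exact ⟨x, θ, hθ, h, hxθ, hθV⟩
    · obtain ⟨y, φ, hφ, h1, h2, -, h3⟩ := exists_exit hζx h
      exact ⟨y, φ, hφ, h1, h2, h3⟩
  have hfin := finrank_sup_span_singleton_of_notMem hφV
  have hlat := hV.sup_span_singleton hφ
  refine notMem_Xi2_of_mem_Xi hx hlat (by omega) ⟨y, ?_, mem_Ups_iff.2
    ((reflTransGen_stepIn_mono le_top (reflTransGen_stepIn_symm hζy)).trans hζx)⟩
  have hnd : Module.finrank ℝ V < d := by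
    have := Submodule.finrank_le (V ⊔ Submodule.span ℝ {φ})
    rw [finrank_euclideanSpace_fin] at this
    omega
  have hE := norm_sub_le_of_reflTransGen_stepIn hρ.le hL0 hL hV hζy
  have hA : 0 < ρ ^ α 1 := Real.rpow_pos_of_pos hρ _
  have hP : 0 < ρ ^ α (Module.finrank ℝ V) := Real.rpow_pos_of_pos hρ _
  have hζV : ProjBound ζ V (ρ ^ α (Module.finrank ℝ V)) := fun u hu =>
    (projBound_norm_projV V ζ u hu).trans (by gcongr; exact le_of_lt hζ)
  have hyW := (hζV.of_norm_sub_le (norm_sub_rev ζ y ▸ hE)).sup_span_singleton (by positivity)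
    hA.le hL0 (abs_inner_le_of_mem_layer hyφ) (hL V hV φ hφ hφV)
  show ‖projV _ y‖ < _
  rw [hfin]
  exact (hyW.norm_projV_le (by positivity)).trans_lt (hgap _ h1 hnd)

/-- Chains with directions in `V` are invariant under translations orthogonal to `V`. -/
theorem reflTransGen_stepIn_add {V : Submodule ℝ (EuclideanSpace ℝ (Fin d))}
    {ν : EuclideanSpace ℝ (Fin d)} (hν : ν ∈ Vᗮ)
    (h : ReflTransGen (stepIn B ρ a r V) x y) :
    ReflTransGen (stepIn B ρ a r V) (x + ν) (y + ν) := by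
  refine h.lift (· + ν) ?_
  rintro x y ⟨θ, hθ, hm, hx, hy, l, hl⟩
  have hν0 : ⟪ν, θ⟫ = 0 := Submodule.inner_left_of_mem_orthogonal hm hν
  have hlayer : ∀ w, w ∈ layer ρ a θ → w + ν ∈ layer ρ a θ := fun w hw => by
    simpa [layer, inner_add_left, hν0] using hw
  exact ⟨θ, hθ, hm, hlayer x hx, hlayer y hy, l, by rw [add_sub_add_right_eq_sub, hl]⟩

theorem resN_subset_resN_add {α : ℕ → ℝ} {V : Submodule ℝ (EuclideanSpace ℝ (Fin d))}
    {ν : EuclideanSpace ℝ (Fin d)}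
    (hdir : ∀ x ∈ Xi B ρ r α V, ∀ θ ∈ Theta0 B r, x ∈ layer ρ (α 1) θ → θ ∈ V)
    (hx : x ∈ Xi B ρ r α V) (hν : ν ∈ Vᗮ) :
    resN B ρ (α 1) r x ⊆ resN B ρ (α 1) r (x + ν) := by
  intro m hm
  have hV : ReflTransGen (stepIn B ρ (α 1) r V) x (x + m) := by
    by_contra hn
    obtain ⟨y, θ, hθ, hxy, hyθ, -, hθV⟩ := exists_exit (mem_Ups_iff.1 hm) hn
    exact hθV (hdir y (mem_Xi_of_mem_Ups hx
      (mem_Ups_iff.2 (reflTransGen_stepIn_mono le_top hxy))) θ hθ hyθ)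
  have h := reflTransGen_stepIn_mono le_top (reflTransGen_stepIn_add hν hV)
  rw [add_right_comm] at h
  exact mem_Ups_iff.2 h

end Steps

theorem le_of_gap {κ : ℝ} {α : ℕ → ℝ} (hκ : 0 < κ)
    (hα : ∀ n < d, α n + 2 * κ * (d : ℝ) ^ 2 < α (n + 1)) {n : ℕ} (h1 : 1 ≤ n) (hn : n ≤ d) :
    α 1 ≤ α n := by
  induction n, h1 using Nat.le_induction with
  | base => exact le_rfl
  | succ n _ ih =>
    have := hα n (by omega)
    have : 0 ≤ 2 * κ * (d : ℝ) ^ 2 := by positivity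
    linarith [ih (by omega)]

/-- For large `ρ` the gaps between the exponents absorb the loss `1 + C ρ^{κd}` at each of at
most `d` steps. -/
theorem mul_add_lt_rpow_of_gap {κ ρ C : ℝ} {α : ℕ → ℝ} (hκ : 0 < κ) (hρ : 1 ≤ ρ)
    (hC : 0 ≤ C) (hα : ∀ n < d, α n + 2 * κ * (d : ℝ) ^ 2 < α (n + 1))
    (hlarge : (6 * (1 + C)) ^ d ≤ ρ ^ (κ * (d : ℝ) ^ 2)) {n : ℕ} (h1 : 1 ≤ n) (hn : n < d) :
    (1 + C * (ρ ^ κ) ^ d) *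
        (ρ ^ α n + 2 * ((6 * (1 + C * (ρ ^ κ) ^ d)) ^ n * ρ ^ α 1) + ρ ^ α 1) <
      ρ ^ α (n + 1) := by
  have hρ0 : 0 < ρ := by linarith
  have hR : 1 ≤ (ρ ^ κ) ^ d := one_le_pow₀ (Real.one_le_rpow hρ hκ.le)
  set K := 1 + C * (ρ ^ κ) ^ d with hK
  have hK1 : 1 ≤ K := by rw [hK]; nlinarith
  have hKle : K ≤ (1 + C) * (ρ ^ κ) ^ d := by rw [hK]; nlinarith
  have hA : ρ ^ α 1 ≤ ρ ^ α n :=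
    Real.rpow_le_rpow_of_exponent_le hρ (le_of_gap hκ hα h1 hn.le)
  have hP : 0 < ρ ^ α n := Real.rpow_pos_of_pos hρ0 _
  have hpow : 1 ≤ (6 * K) ^ n := one_le_pow₀ (by linarith)
  have hKn : (6 * K) ^ d ≤ ρ ^ (2 * κ * (d : ℝ) ^ 2) :=
    calc (6 * K) ^ d ≤ (6 * ((1 + C) * (ρ ^ κ) ^ d)) ^ d := by gcongr
      _ = (6 * (1 + C)) ^ d * ρ ^ (κ * (d : ℝ) ^ 2) := by
        rw [← mul_assoc, mul_pow, ← pow_mul, ← sq, Real.rpow_mul hρ0.le]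
        norm_cast
      _ ≤ ρ ^ (κ * (d : ℝ) ^ 2) * ρ ^ (κ * (d : ℝ) ^ 2) := by gcongr
      _ = ρ ^ (2 * κ * (d : ℝ) ^ 2) := by rw [← Real.rpow_add hρ0]; ring_nf
  calc K * (ρ ^ α n + 2 * ((6 * K) ^ n * ρ ^ α 1) + ρ ^ α 1)
      ≤ K * ((6 * K) ^ n * ρ ^ α n + 2 * ((6 * K) ^ n * ρ ^ α n) + (6 * K) ^ n * ρ ^ α n) := by
        have := le_mul_of_one_le_left hP.le hpow
        gcongr
        exact hA.trans this
    _ = 4 * K * ((6 * K) ^ n * ρ ^ α n) := by ring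
    _ < 6 * K * ((6 * K) ^ n * ρ ^ α n) := by gcongr; norm_num
    _ = (6 * K) ^ (n + 1) * ρ ^ α n := by ring
    _ ≤ (6 * K) ^ d * ρ ^ α n := by
        gcongr
        · linarith
        · omega
    _ ≤ ρ ^ (2 * κ * (d : ℝ) ^ 2) * ρ ^ α n := by gcongr
    _ = ρ ^ (α n + 2 * κ * (d : ℝ) ^ 2) := by rw [← Real.rpow_add hρ0, add_comm]
    _ ≤ ρ ^ α (n + 1) := Real.rpow_le_rpow_of_exponent_le hρ (hα n hn).le


/-- Lemma 7.1: for sufficiently large ρ, if ξ ∈ Ξ(V), ν ∈ V^⊥ and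
ξ + ν ∈ Ξ(V), then N(ξ) = N(ξ + ν); consequently, on Ξ(V) the set N(ξ) depends only
on the projection ξ_V. -/
theorem resN_depends_only_on_projV
    (d : ℕ) (hd : 2 ≤ d) (B : Basis (Fin d) ℝ (EuclideanSpace ℝ (Fin d)))
    (κ : ℝ) (α : ℕ → ℝ) :
    ∃ ρ₀ : ℝ, ∀ ρ r : ℝ, ρ₀ ≤ ρ → GoodParams B ρ r κ α →
      ∀ V : Submodule ℝ (EuclideanSpace ℝ (Fin d)), IsLatticeSubspace B r V →
        (∀ ξ ∈ Xi B ρ r α V, ∀ ν ∈ Vᗮ, ξ + ν ∈ Xi B ρ r α V →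
          resN B ρ (α 1) r ξ = resN B ρ (α 1) r (ξ + ν)) ∧
        (∀ ξ ∈ Xi B ρ r α V, ∀ ξ' ∈ Xi B ρ r α V, projV V ξ = projV V ξ' →
          resN B ρ (α 1) r ξ = resN B ρ (α 1) r ξ') := by
  by_cases hκ : 0 < κ
  swap
  · exact ⟨0, fun ρ r _ h => absurd h.2.1 hκ⟩
  obtain ⟨C, hC, hangle⟩ := exists_norm_le_mul_norm_sub (by omega : 1 ≤ d) B
  have hexp : 0 < κ * (d : ℝ) ^ 2 := by positivity
  obtain ⟨ρ₀, hρ₀⟩ := Filter.eventually_atTop.1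
    ((tendsto_rpow_atTop hexp).eventually_ge_atTop ((6 * (1 + C)) ^ d))
  refine ⟨ρ₀, fun ρ r hρρ₀ ⟨hρ, _, _, hα, _, hr, htop⟩ V hV => ?_⟩
  have hρ0 : 0 < ρ := by linarith
  have hdir : ∀ x ∈ Xi B ρ r α V, ∀ θ ∈ Theta0 B r, x ∈ layer ρ (α 1) θ → θ ∈ V :=
    fun x hx θ hθ hxθ => mem_of_mem_layer_of_mem_Xi hρ0 (by positivity)
      (hangle r (ρ ^ κ) hr htop)
      (fun n h1 hn => mul_add_lt_rpow_of_gap hκ hρ hC hα (hρ₀ ρ hρρ₀) h1 hn) hV hx hθ hxθ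
  have hmain : ∀ ξ ∈ Xi B ρ r α V, ∀ ν ∈ Vᗮ, ξ + ν ∈ Xi B ρ r α V →
      resN B ρ (α 1) r ξ = resN B ρ (α 1) r (ξ + ν) := fun ξ hξ ν hν hξν =>
    (resN_subset_resN_add hdir hξ hν).antisymm <| by
      simpa using resN_subset_resN_add hdir hξν (neg_mem hν)
  refine ⟨hmain, fun ξ hξ ξ' hξ' hproj => ?_⟩
  have hν : ξ' - ξ ∈ Vᗮ := by
    have := sub_mem (sub_projV_mem_orthogonal V ξ') (sub_projV_mem_orthogonal V ξ)
    rwa [hproj, sub_sub_sub_cancel_right] at this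
  simpa using hmain ξ hξ (ξ' - ξ) hν (by simpa using hξ')
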